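/- arXiv:1611.05450 — 5 statements merged into one kernel-verified Lean document; each statement's English description precedes it below -/
import Mathlib

section
/- Let V be a finite set with N = |V| elements, let the matrix index type n satisfy |n| = 2^N, and let h : V → Matrix n n ℂ be pairwise commuting matrices such that for every nonempty subset M ⊆ V the trace of the product ∏_{v ∈ M} h v vanishes. Then for every subset T ⊆ V, the trace of ∏_{v ∈ T} (1 + h v) equals 2^N. -/
/-- Expansion of the product of `1 + h v` over subsets, for commuting elements of a ring. -/
theorem noncommProd_one_add_expand {V R : Type*} [DecidableEq V] [Ring R]
    (h : V → R) (hcomm : ∀ v w, Commute (h v) (h w)) (T : Finset V) (hc) :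
    T.noncommProd (fun v => 1 + h v) hc =
      ∑ M ∈ T.powerset, M.noncommProd h (fun a _ b _ _ => hcomm a b) := by
  induction T using Finset.induction_on with
  | empty =>
    rw [Finset.noncommProd_empty, Finset.powerset_empty, Finset.sum_singleton]
    exact (Finset.noncommProd_empty h _).symm
  | insert a s ha ih =>
    rw [Finset.noncommProd_insert_of_notMem _ _ _ _ ha, Finset.sum_powerset_insert ha, ih,
      add_mul, one_mul, Finset.mul_sum]
    congr 1
    refine Finset.sum_congr rfl fun M hM => ?_
    exact (Finset.noncommProd_insert_of_notMem M a h _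
      (fun hh => ha (Finset.mem_powerset.1 hM hh))).symm

/-- If pairwise commuting matrices `h v` on a `2^N`-dimensional space have traceless
products over every nonempty subset, then `Tr ∏_{v ∈ T} (1 + h v) = 2^N` for every subset `T`. -/
theorem trace_prod_one_add_of_traceless {V n : Type*} [Fintype V] [DecidableEq V]
    [Fintype n] [DecidableEq n]
    (h : V → Matrix n n ℂ)
    (hcomm : ∀ v w, Commute (h v) (h w))
    (hcard : Fintype.card n = 2 ^ Fintype.card V)
    (htr : ∀ M : Finset V, M.Nonempty →
      (M.noncommProd h (fun a _ b _ _ => hcomm a b)).trace = 0)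
    (T : Finset V) :
    (T.noncommProd (fun v => 1 + h v)
        (fun a _ b _ _ =>
          (Commute.one_left (1 + h b)).add_left
            ((Commute.one_right (h a)).add_right (hcomm a b)))).trace =
      (2 : ℂ) ^ Fintype.card V := by
  refine (congrArg Matrix.trace (noncommProd_one_add_expand h hcomm T _)).trans ?_
  rw [Matrix.trace_sum]
  refine (Finset.sum_eq_single_of_mem ∅ (Finset.empty_mem_powerset T)
      (fun M _ hM => htr M (Finset.nonempty_iff_ne_empty.2 hM))).trans ?_
  refine (congrArg Matrix.trace (Finset.noncommProd_empty h _)).trans ?_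
  simp [hcard]
end

section
/- Let V be a finite set with N = |V| ≥ 1 elements, let h : V → (square complex matrices) be pairwise commuting Hermitian matrices with (h v)*(h v) = 1, and let P be a Hermitian matrix with P*P = P that commutes with every h v. Fix β > 0 and set p = 2/(e^{2β}+1); for T ⊆ V set Pr(T) = (1-p)^{|T|} p^{N-|T|} and ρ(T) = 2^{-N} • ∏_{v ∈ T}(1 + h v). Assume: Tr(ρ(T)) = 1 for every T ⊆ V; Tr(P * ρ(T)) = 1/2 for every T ≠ V; and P * ρ(V) = ρ(V). Define ρ' = Σ_{T ⊆ V} Pr(T) • ρ(T), Z = Tr(P * ρ' * P), ρ_sym = Z⁻¹ • (P * ρ' * P), and ρ_f = Pr(V) • ρ(V) + Σ_{T ≠ V} (2·Pr(T)) • (P * ρ(T) * P). Then the matrix D = ρ_sym − ρ_f is Hermitian and its trace norm, i.e. the sum of the absolute values of its eigenvalues, is at most 2(1-p)^N / (1 + (1-p)^N). -/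
open scoped ComplexOrder in
lemma traceNorm_sub_le {n : Type*} [Fintype n] [DecidableEq n] (A B D : Matrix n n ℂ)
    (hA : A.PosSemidef) (hB : B.PosSemidef) (hD : D = A - B) :
    ∃ hDh : D.IsHermitian, ∑ i, |hDh.eigenvalues i| ≤ (A.trace + B.trace).re := by
  have hDh : D.IsHermitian := by rw [hD]; exact hA.1.sub hB.1
  refine ⟨hDh, ?_⟩
  obtain ⟨U, hU, hUD⟩ : ∃ U : Matrix n n ℂ, U * U.conjTranspose = 1 ∧
      ∀ i, (U.conjTranspose * D * U) i i = (hDh.eigenvalues i : ℂ) := by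
    refine ⟨hDh.eigenvectorUnitary, ?_, fun i => ?_⟩
    · exact Matrix.mem_unitaryGroup_iff.mp hDh.eigenvectorUnitary.2
    · have h1 := hDh.conjStarAlgAut_star_eigenvectorUnitary
      rw [Unitary.conjStarAlgAut_star_apply] at h1
      have h2 := congrFun (congrFun h1 i) i
      simpa [Matrix.star_eq_conjTranspose] using h2
  have hA' := hA.conjTranspose_mul_mul_same U
  have hB' := hB.conjTranspose_mul_mul_same U
  have tr : ∀ M : Matrix n n ℂ, (U.conjTranspose * M * U).trace = M.trace := by
    intro M
    rw [Matrix.trace_mul_cycle, hU, one_mul]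
  rw [← tr A, ← tr B, Matrix.trace, Matrix.trace, ← Finset.sum_add_distrib, Complex.re_sum]
  refine Finset.sum_le_sum fun i _ => ?_
  have h1 := (Complex.le_def.mp (hA'.diag_nonneg (i := i))).1
  have h2 := (Complex.le_def.mp (hB'.diag_nonneg (i := i))).1
  have h3 := congrArg Complex.re (hUD i)
  have h4 : U.conjTranspose * D * U =
      U.conjTranspose * A * U - U.conjTranspose * B * U := by
    rw [← sub_mul, ← mul_sub, ← hD]
  rw [h4] at h3
  simp only [Matrix.sub_apply, Complex.sub_re, Complex.ofReal_re] at h3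
  simp only [Matrix.diag_apply, Complex.add_re, Complex.zero_re] at *
  rw [← h3, abs_le]
  constructor <;> linarith

lemma noncommProd_herm_sq {V n : Type*} [DecidableEq V]
    [Fintype n] [DecidableEq n]
    (h : V → Matrix n n ℂ)
    (hcomm : ∀ v w, Commute (h v) (h w))
    (hherm : ∀ v, (h v).IsHermitian)
    (hsq : ∀ v, h v * h v = 1) (T : Finset V)
    (c : (T : Set V).Pairwise (Function.onFun Commute (fun v => 1 + h v))) :
    (T.noncommProd (fun v => 1 + h v) c).IsHermitian ∧
    T.noncommProd (fun v => 1 + h v) c * T.noncommProd (fun v => 1 + h v) c =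
      (2 : ℝ) ^ T.card • T.noncommProd (fun v => 1 + h v) c := by
  induction T using Finset.induction_on with
  | empty => simp [Matrix.IsHermitian]
  | insert a s ha ih =>
    have cs : (s : Set V).Pairwise (Function.onFun Commute (fun v => 1 + h v)) :=
      c.mono (by simp)
    obtain ⟨i1, i2⟩ := ih cs
    rw [Finset.noncommProd_insert_of_notMem _ _ _ _ ha]
    have hc : Commute (1 + h a) (s.noncommProd (fun v => 1 + h v) cs) := by
      apply Finset.noncommProd_commute
      intro b _
      exact (Commute.one_left (1 + h b)).add_left
              ((Commute.one_right (h a)).add_right (hcomm a b))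
    set Q := s.noncommProd (fun v => 1 + h v) cs
    have hh : (1 + h a).IsHermitian := Matrix.isHermitian_one.add (hherm a)
    constructor
    · unfold Matrix.IsHermitian
      rw [Matrix.conjTranspose_mul, hh.eq, i1.eq, hc.eq]
    · have e : (1 + h a) * (1 + h a) = (2:ℝ) • (1 + h a) := by
        rw [mul_add, add_mul, add_mul, hsq, two_smul]
        simp only [one_mul, mul_one]
        abel
      rw [mul_assoc, ← mul_assoc Q, ← hc.eq, mul_assoc, i2, ← mul_assoc, e,
        Finset.card_insert_of_notMem ha]
      simp only [smul_mul_assoc, mul_smul_comm, smul_smul]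
      rw [pow_succ, mul_comm]

/-- Trace-norm bound between the symmetric Gibbs ensemble and the free symmetric ensemble. -/
theorem traceNorm_symmetric_gibbs_minus_free {V n : Type*} [Fintype V] [DecidableEq V]
    [Fintype n] [DecidableEq n]
    (h : V → Matrix n n ℂ)
    (hcomm : ∀ v w, Commute (h v) (h w))
    (hherm : ∀ v, (h v).IsHermitian)
    (hsq : ∀ v, h v * h v = 1)
    (P : Matrix n n ℂ) (hPherm : P.IsHermitian) (hPP : P * P = P)
    (hPcomm : ∀ v, Commute P (h v))
    (hN : 1 ≤ Fintype.card V)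
    (β p : ℝ) (hβ : 0 < β) (hp : p = 2 / (Real.exp (2 * β) + 1))
    (Pr : Finset V → ℝ)
    (hPr : ∀ T : Finset V, Pr T = (1 - p) ^ T.card * p ^ (Fintype.card V - T.card))
    (ρ : Finset V → Matrix n n ℂ)
    (hρ : ∀ T : Finset V, ρ T = ((2 : ℂ) ^ Fintype.card V)⁻¹ •
        T.noncommProd (fun v => 1 + h v)
          (fun a _ b _ _ =>
            (Commute.one_left (1 + h b)).add_left
              ((Commute.one_right (h a)).add_right (hcomm a b))))
    (htr1 : ∀ T : Finset V, (ρ T).trace = 1)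
    (htrP : ∀ T : Finset V, T ≠ Finset.univ → (P * ρ T).trace = 1 / 2)
    (hPV : P * ρ (Finset.univ : Finset V) = ρ (Finset.univ : Finset V))
    (ρ' : Matrix n n ℂ)
    (hρ' : ρ' = ∑ T ∈ (Finset.univ : Finset V).powerset, Pr T • ρ T)
    (Z : ℂ) (hZ : Z = (P * ρ' * P).trace)
    (ρsym : Matrix n n ℂ) (hρsym : ρsym = Z⁻¹ • (P * ρ' * P))
    (ρf : Matrix n n ℂ)
    (hρf : ρf = Pr (Finset.univ : Finset V) • ρ (Finset.univ : Finset V) +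
        ∑ T ∈ ((Finset.univ : Finset V).powerset).erase (Finset.univ : Finset V),
          (2 * Pr T) • (P * ρ T * P))
    (D : Matrix n n ℂ) (hD : D = ρsym - ρf) :
    ∃ hDh : D.IsHermitian,
      ∑ i, |hDh.eigenvalues i| ≤
        2 * (1 - p) ^ Fintype.card V / (1 + (1 - p) ^ Fintype.card V) := by
  open scoped ComplexOrder in
  have hp0 : 0 < p := by rw [hp]; positivity
  have hp1 : p < 1 := by
    have : 1 < Real.exp (2 * β) := Real.one_lt_exp_iff.mpr (by linarith)
    rw [hp, div_lt_one (by positivity)]; linarith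
  have hPr0 : ∀ T, 0 ≤ Pr T := fun T => by
    rw [hPr]; have : 0 ≤ 1 - p := by linarith
    positivity
  set q : ℝ := (1 - p) ^ Fintype.card V with hq
  have hq0 : 0 ≤ q := pow_nonneg (by linarith) _
  have hq1 : q ≤ 1 := pow_le_one₀ (by linarith) (by linarith)
  have hPrV : Pr Finset.univ = q := by rw [hPr]; simp [hq]
  have hsum : ∑ T ∈ (Finset.univ : Finset V).powerset, Pr T = 1 := by
    have := Fintype.sum_pow_mul_eq_add_pow V (1 - p) p
    rw [Finset.powerset_univ]
    simp only [hPr, this]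
    simp
  have hmem : (Finset.univ : Finset V) ∈ (Finset.univ : Finset V).powerset := by simp
  have hsum' : ∑ T ∈ ((Finset.univ : Finset V).powerset).erase Finset.univ, Pr T = 1 - q := by
    rw [← Finset.add_sum_erase _ _ hmem, hPrV] at hsum
    linarith
  have hpsd : ∀ T, (ρ T).PosSemidef := by
    intro T
    obtain ⟨h1, h2⟩ := noncommProd_herm_sq h hcomm hherm hsq T (fun a _ b _ _ =>
            (Commute.one_left (1 + h b)).add_left
              ((Commute.one_right (h a)).add_right (hcomm a b)))
    rw [hρ]
    set Q := T.noncommProd (fun v => 1 + h v) (fun a _ b _ _ =>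
            (Commute.one_left (1 + h b)).add_left
              ((Commute.one_right (h a)).add_right (hcomm a b)))
    have h3 : Q = ((2 : ℝ) ^ T.card)⁻¹ • (Q.conjTranspose * Q) := by
      rw [h1.eq, h2, smul_smul, inv_mul_cancel₀ (by positivity), one_smul]
    have h4 : Q.PosSemidef := by
      rw [h3]
      exact (Matrix.posSemidef_conjTranspose_mul_self Q).smul (by positivity)
    exact h4.smul (by positivity)
  have hσpsd : ∀ T, (P * ρ T * P).PosSemidef := fun T => by
    have := (hpsd T).conjTranspose_mul_mul_same P
    rwa [hPherm.eq] at this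
  have hσtr : ∀ T, (P * ρ T * P).trace = (P * ρ T).trace := fun T => by
    rw [Matrix.trace_mul_cycle, hPP]
  have hσV : P * ρ Finset.univ * P = ρ Finset.univ := by
    have hc : Commute P (ρ Finset.univ) := by
      rw [hρ]
      apply Commute.smul_right
      apply Finset.noncommProd_commute
      intro b _
      exact (Commute.one_right P).add_right (hPcomm b)
    rw [hPV, ← hc.eq, hPV]
  set B : Matrix n n ℂ := ∑ T ∈ ((Finset.univ : Finset V).powerset).erase Finset.univ,
    Pr T • (P * ρ T * P) with hB
  have hBpsd : B.PosSemidef := Matrix.posSemidef_sum _ fun T _ => (hσpsd T).smul (hPr0 T)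
  have hBtr : B.trace = (((1 - q) / 2 : ℝ) : ℂ) := by
    rw [hB, Matrix.trace_sum, ← hsum', Finset.sum_div, Complex.ofReal_sum]
    refine Finset.sum_congr rfl fun T hT => ?_
    rw [Matrix.trace_smul, hσtr, htrP T (Finset.ne_of_mem_erase hT), Complex.real_smul]
    push_cast
    ring
  have hPρ' : P * ρ' * P = q • ρ Finset.univ + B := by
    rw [hρ', Finset.mul_sum, Finset.sum_mul, ← Finset.add_sum_erase _ _ hmem, hPrV, hB]
    simp only [mul_smul_comm, smul_mul_assoc, hσV]
  have hZ' : Z = (((1 + q) / 2 : ℝ) : ℂ) := by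
    rw [hZ, hPρ', Matrix.trace_add, Matrix.trace_smul, htr1, hBtr, Complex.real_smul]
    push_cast
    ring
  have hf : ρf = q • ρ Finset.univ + (2 : ℝ) • B := by
    rw [hρf, hPrV, hB, Finset.smul_sum]
    simp only [smul_smul]
  have hsym : ρsym = (2 / (1 + q)) • (q • ρ Finset.univ + B) := by
    rw [hρsym, hPρ', hZ', ← Complex.ofReal_inv, inv_div, Complex.coe_smul]
  have h1q : 1 + q ≠ 0 := by positivity
  have hDD : D = ((1 - q) * q / (1 + q)) • ρ Finset.univ - (2 * q / (1 + q)) • B := by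
    have e1 : (1 - q) * q / (1 + q) = 2 / (1 + q) * q - q := by field_simp; ring
    have e2 : 2 * q / (1 + q) = 2 - 2 / (1 + q) := by field_simp; ring
    rw [hD, hsym, hf, e1, e2]
    module
  obtain ⟨hDh, hle⟩ := traceNorm_sub_le _ _ D
    ((hpsd Finset.univ).smul (show 0 ≤ (1 - q) * q / (1 + q) from
      div_nonneg (mul_nonneg (by linarith) hq0) (by linarith)))
    (hBpsd.smul (show 0 ≤ 2 * q / (1 + q) by positivity)) hDD
  refine ⟨hDh, hle.trans ?_⟩
  rw [Matrix.trace_smul, Matrix.trace_smul, htr1, hBtr, Complex.real_smul, Complex.real_smul,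
    mul_one, ← Complex.ofReal_mul, ← Complex.ofReal_add, Complex.ofReal_re]
  have e : (1 - q) * q / (1 + q) + 2 * q / (1 + q) * ((1 - q) / 2) = 2 * q * (1 - q) / (1 + q) := by
    field_simp; ring
  rw [e]
  refine div_le_div_of_nonneg_right ?_ (by linarith)
  nlinarith
end

section
/- Let p ∈ (0,1) and c > 0 be real numbers such that δ := −2 − c·log(1−p) > 0. Then for every real L ≥ e and every natural number n with (n : ℝ) ≤ L² / (c · log L), we have 1 − (1 − (1−p)^{c·log L})^n ≤ (1/c) · L^{−δ}, where (1−p)^{c·log L} and L^{−δ} denote real powers (rpow). -/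
/-- If `δ = -2 - c·log(1-p) > 0`, then for `L ≥ e` and `n ≤ L²/(c log L)`,
`1 - (1 - (1-p)^{c log L})^n ≤ (1/c) L^{-δ}`. -/
theorem valid_configuration_probability_bound
    (p c : ℝ) (hp0 : 0 < p) (hp1 : p < 1) (hc : 0 < c)
    (δ : ℝ) (hδdef : δ = -2 - c * Real.log (1 - p)) (hδ : 0 < δ)
    (L : ℝ) (hL : Real.exp 1 ≤ L)
    (n : ℕ) (hn : (n : ℝ) ≤ L ^ 2 / (c * Real.log L)) :
    1 - (1 - (1 - p) ^ (c * Real.log L)) ^ n ≤ (1 / c) * L ^ (-δ) := by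
  have hL0 : 0 < L := lt_of_lt_of_le (Real.exp_pos 1) hL
  have hlog : 1 ≤ Real.log L := (Real.le_log_iff_exp_le hL0).2 hL
  have hp : 0 < 1 - p := by linarith
  have hq : (1 - p) ^ (c * Real.log L) * L ^ 2 = L ^ (-δ) := by
    rw [← Real.rpow_natCast L 2, Real.rpow_def_of_pos hp, Real.rpow_def_of_pos hL0,
      Real.rpow_def_of_pos hL0, ← Real.exp_add, hδdef]
    congr 1
    push_cast
    ring
  have hq0 : 0 ≤ (1 - p) ^ (c * Real.log L) := Real.rpow_nonneg hp.le _
  have hq1 : (1 - p) ^ (c * Real.log L) ≤ 1 :=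
    Real.rpow_le_one hp.le (by linarith) (by positivity)
  have hB := one_add_mul_le_pow (a := -(1 - p) ^ (c * Real.log L)) (by linarith) n
  rw [← sub_eq_add_neg 1] at hB
  have hn2 : (n : ℝ) ≤ L ^ 2 / c :=
    hn.trans (div_le_div_of_nonneg_left (by positivity) hc (by nlinarith))
  have h3 := mul_le_mul_of_nonneg_right hn2 hq0
  have h4 : L ^ 2 / c * (1 - p) ^ (c * Real.log L) = (1 / c) * L ^ (-δ) := by
    rw [← hq]
    ring
  linarith
end

section
/- Let E be a finite type and let Z be a finite family of finite subsets of E that is closed under symmetric difference (for all a, b ∈ Z, a Δ b ∈ Z). Let β ≥ 0 be real and let l ∈ Z. Then Σ_{c ∈ Z, l ⊆ c} exp(−2β·|c|) ≤ exp(−2β·|l|) · Σ_{c ∈ Z} exp(−2β·|c|), where |c| denotes the cardinality of c. -/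
open scoped symmDiff

/-- Peierls-type bound: for a family of cycles closed under symmetric difference,
the weight of cycles containing a fixed cycle `l` is suppressed by `exp(-2β|l|)`. -/
theorem sum_exp_subset_le {E : Type*} [Fintype E] [DecidableEq E]
    (Z : Finset (Finset E))
    (hZ : ∀ a ∈ Z, ∀ b ∈ Z, a ∆ b ∈ Z)
    (β : ℝ) (hβ : 0 ≤ β) (l : Finset E) (hl : l ∈ Z) :
    ∑ c ∈ Z.filter (fun c => l ⊆ c), Real.exp (-2 * β * c.card) ≤
      Real.exp (-2 * β * l.card) * ∑ c ∈ Z, Real.exp (-2 * β * c.card) := by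
  have hinj : Set.InjOn (fun c => l ∆ c) (Z.filter (fun c => l ⊆ c) : Finset (Finset E)) :=
    fun a _ b _ h => symmDiff_right_injective l h
  have hsub : (Z.filter (fun c => l ⊆ c)).image (fun c => l ∆ c) ⊆ Z := by
    intro x hx
    obtain ⟨c, hc, rfl⟩ := Finset.mem_image.1 hx
    exact hZ l hl c (Finset.mem_filter.1 hc).1
  have key : ∑ c ∈ Z.filter (fun c => l ⊆ c), Real.exp (-2 * β * c.card) =
      Real.exp (-2 * β * l.card) *
        ∑ c ∈ (Z.filter (fun c => l ⊆ c)).image (fun c => l ∆ c),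
          Real.exp (-2 * β * c.card) := by
    rw [Finset.sum_image hinj, Finset.mul_sum]
    refine Finset.sum_congr rfl fun c hc => ?_
    have hlc : l ⊆ c := (Finset.mem_filter.1 hc).2
    have h1 : l ∆ c = c \ l := symmDiff_of_le hlc
    have h2 : (((c \ l).card : ℕ) : ℝ) + l.card = c.card := by
      exact_mod_cast Finset.card_sdiff_add_card_eq_card hlc
    rw [← Real.exp_add, h1, ← h2]
    congr 1
    ring
  rw [key]
  exact mul_le_mul_of_nonneg_left
    (Finset.sum_le_sum_of_subset_of_nonneg hsub fun _ _ _ => (Real.exp_pos _).le)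
    (Real.exp_pos _).le
end

section
/- Let E be a finite type and let Z be a finite family of finite subsets of E that is closed under symmetric difference (for all a, b ∈ Z, a Δ b ∈ Z). Let β ≥ 0 be real and let L ⊆ Z be a subfamily. Then Σ_{c ∈ Z such that some l ∈ L satisfies l ⊆ c} exp(−2β·|c|) ≤ ( Σ_{l ∈ L} exp(−2β·|l|) ) · ( Σ_{c ∈ Z} exp(−2β·|c|) ), where |c| denotes the cardinality of c. -/
open scoped symmDiff

/-- Union bound version: the weight of cycles containing some loop from a subfamily `L`
is bounded by the weight of `L` times the total weight. -/
theorem sum_exp_exists_subset_le {E : Type*} [Fintype E] [DecidableEq E]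
    (Z : Finset (Finset E))
    (hZ : ∀ a ∈ Z, ∀ b ∈ Z, a ∆ b ∈ Z)
    (β : ℝ) (hβ : 0 ≤ β) (L : Finset (Finset E)) (hL : L ⊆ Z) :
    ∑ c ∈ Z.filter (fun c => ∃ l ∈ L, l ⊆ c), Real.exp (-2 * β * c.card) ≤
      (∑ l ∈ L, Real.exp (-2 * β * l.card)) *
        ∑ c ∈ Z, Real.exp (-2 * β * c.card) := by
  have key : ∀ l ∈ L, ∑ c ∈ Z.filter (fun c => l ⊆ c), Real.exp (-2 * β * c.card) ≤
      Real.exp (-2 * β * l.card) * ∑ c ∈ Z, Real.exp (-2 * β * c.card) := by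
    intro l hl
    have hinj : Set.InjOn (fun c : Finset E => c ∆ l) (Z.filter (fun c => l ⊆ c)) :=
      fun a _ b _ h => symmDiff_left_injective l h
    have himg : (Z.filter (fun c => l ⊆ c)).image (fun c => c ∆ l) ⊆ Z := by
      intro x hx
      obtain ⟨c, hc, rfl⟩ := Finset.mem_image.1 hx
      exact hZ c (Finset.mem_filter.1 hc).1 l (hL hl)
    calc ∑ c ∈ Z.filter (fun c => l ⊆ c), Real.exp (-2 * β * c.card)
        = ∑ c ∈ Z.filter (fun c => l ⊆ c),
            Real.exp (-2 * β * l.card) * Real.exp (-2 * β * (c ∆ l).card) := by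
          refine Finset.sum_congr rfl fun c hc => ?_
          have hlc : l ⊆ c := (Finset.mem_filter.1 hc).2
          have h1 : c ∆ l = c \ l := symmDiff_of_ge hlc
          have h2 := Finset.card_sdiff_add_card_eq_card hlc
          rw [h1, ← Real.exp_add, ← h2]
          push_cast
          ring_nf
      _ = Real.exp (-2 * β * l.card) *
            ∑ c ∈ (Z.filter (fun c => l ⊆ c)).image (fun c => c ∆ l),
              Real.exp (-2 * β * c.card) := by
          rw [Finset.sum_image hinj, Finset.mul_sum]
      _ ≤ _ := by
          refine mul_le_mul_of_nonneg_left ?_ (Real.exp_pos _).le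
          exact Finset.sum_le_sum_of_subset_of_nonneg himg fun _ _ _ => (Real.exp_pos _).le
  rw [Finset.sum_mul]
  refine le_trans ?_ (Finset.sum_le_sum key)
  simp only [Finset.sum_filter]
  rw [Finset.sum_comm]
  refine Finset.sum_le_sum fun c _ => ?_
  have hnn : ∀ l ∈ L, 0 ≤ (if l ⊆ c then Real.exp (-2 * β * c.card) else 0) := by
    intro l _
    split_ifs
    · exact (Real.exp_pos _).le
    · exact le_rfl
  split_ifs with h
  · obtain ⟨l, hl, hlc⟩ := h
    have := Finset.single_le_sum hnn hl
    rwa [if_pos hlc] at this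
  · exact Finset.sum_nonneg hnn
end
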